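/- arXiv:2203.03076 — 5 statements merged into one kernel-verified Lean document; each statement's English description precedes it below -/
import Mathlib

section
/- Let H be a real inner product space. Let K : [0,∞) → ℝ be positive and integrable with k := ∫_0^∞ K(s) ds, set ρ(t) := ∫_t^∞ K(s) ds, and assume K(s) ≥ δ·ρ(s) for all s ≥ 0, where δ > 0. Let ε > 0, let u ∈ H, and let η : [0,∞) → H be measurable such that s ↦ K(s)·⟨η(s), u⟩, s ↦ K(s)·‖η(s)‖², and s ↦ ρ(s)·‖η(s)‖² are all integrable on [0,∞). Then −‖u‖² + ∫_0^∞ K(s)·⟨η(s), u⟩ ds + (k/2)·‖u‖² − (1/2)·∫_0^∞ K(s)·‖η(s)‖² ds ≤ −[1 − (1 + ε/2)·k]·‖u‖² − (ε·δ/(2·(1+ε)))·∫_0^∞ ρ(s)·‖η(s)‖² ds. -/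
/-!
Write `ρ(s) = ∫_s^∞ K`. The estimate is the integral of a pointwise one. Young's inequality with
weight `1 + ε` gives `⟪η, u⟫ ≤ (1+ε)/2 ‖u‖² + 1/(2(1+ε)) ‖η‖²`, and since
`1/(2(1+ε)) = 1/2 - ε/(2(1+ε))`, the share `ε/(2(1+ε)) K ‖η‖²` of the dissipation `(1/2) K ‖η‖²` is
left over. This share dominates `ε δ/(2(1+ε)) ρ ‖η‖²` because `δ ρ ≤ K`.
-/

open MeasureTheory Set
open scoped RealInnerProductSpace

/-- Young's inequality with weight `1 + ε`, with the coefficient of `‖v‖²` written as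
`1/2 - ε/(2(1+ε))`, which equals `1/(2(1+ε))`. -/
theorem inner_le_young {H : Type*} [NormedAddCommGroup H] [InnerProductSpace ℝ H]
    {ε : ℝ} (hε : 0 < ε) (u v : H) :
    ⟪v, u⟫ ≤ (1 + ε) / 2 * ‖u‖^2 + (1/2 - ε / (2 * (1 + ε))) * ‖v‖^2 := by
  have hcs : ⟪v, u⟫ ≤ ‖v‖ * ‖u‖ := real_inner_le_norm v u
  have hsq : (1 + ε) / 2 * ‖u‖^2 + (1/2 - ε / (2 * (1 + ε))) * ‖v‖^2 - ‖v‖ * ‖u‖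
      = ((1 + ε) * ‖u‖ - ‖v‖)^2 / (2 * (1 + ε)) := by
    field_simp
    ring
  have hnn : 0 ≤ ((1 + ε) * ‖u‖ - ‖v‖)^2 / (2 * (1 + ε)) := by positivity
  linarith

/-- The core dissipativity estimate: for a positive integrable kernel `K`
with total mass `k`, tail `ρ(t) = ∫_t^∞ K`, satisfying `K(s) ≥ δ ρ(s)` on `[0,∞)`
(`δ > 0`), any `ε > 0`, `u ∈ H` and `η : [0,∞) → H` with the stated integrabilities,
`-‖u‖² + ∫_0^∞ K(s)⟨η(s),u⟩ ds + (k/2)‖u‖² - (1/2)∫_0^∞ K(s)‖η(s)‖² ds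
  ≤ -[1-(1+ε/2)k]‖u‖² - (εδ/(2(1+ε)))∫_0^∞ ρ(s)‖η(s)‖² ds`. -/
theorem stmt4 {H : Type*} [NormedAddCommGroup H] [InnerProductSpace ℝ H]
    (K : ℝ → ℝ) (hpos : ∀ s ∈ Ici (0:ℝ), 0 < K s)
    (hint : IntegrableOn K (Ici 0))
    (k δ ε : ℝ) (hk : k = ∫ s in Ioi (0:ℝ), K s)
    (hδ : 0 < δ)
    (hKρ : ∀ s ∈ Ici (0:ℝ), δ * ∫ r in Ioi s, K r ≤ K s)
    (hε : 0 < ε)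
    (u : H) (η : ℝ → H)
    (h1 : IntegrableOn (fun s => K s * ⟪η s, u⟫) (Ici 0))
    (h2 : IntegrableOn (fun s => K s * ‖η s‖^2) (Ici 0))
    (h3 : IntegrableOn (fun s => (∫ r in Ioi s, K r) * ‖η s‖^2) (Ici 0)) :
    -‖u‖^2 + (∫ s in Ici (0:ℝ), K s * ⟪η s, u⟫) + (k/2) * ‖u‖^2
        - (1/2) * ∫ s in Ici (0:ℝ), K s * ‖η s‖^2
      ≤ -(1 - (1 + ε/2) * k) * ‖u‖^2
        - (ε * δ / (2 * (1 + ε))) * ∫ s in Ici (0:ℝ), (∫ r in Ioi s, K r) * ‖η s‖^2 := by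
  have hpt : ∀ s ∈ Ici (0:ℝ), K s * ⟪η s, u⟫ ≤
      (((1 + ε) / 2 * ‖u‖^2) * K s + (1/2) * (K s * ‖η s‖^2))
        - (ε * δ / (2 * (1 + ε))) * ((∫ r in Ioi s, K r) * ‖η s‖^2) := by
    intro s hs
    have hY := mul_le_mul_of_nonneg_left (inner_le_young hε u (η s)) (hpos s hs).le
    have hc : 0 ≤ ε / (2 * (1 + ε)) * ‖η s‖^2 := by positivity
    have hρ := mul_le_mul_of_nonneg_left (hKρ s hs) hc
    have hcδ : ε * δ / (2 * (1 + ε)) = ε / (2 * (1 + ε)) * δ := by ring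
    rw [hcδ]
    linarith
  have hA : IntegrableOn (fun s => ((1 + ε) / 2 * ‖u‖^2) * K s) (Ici 0) := hint.const_mul _
  have hB : IntegrableOn (fun s => (1/2) * (K s * ‖η s‖^2)) (Ici 0) := h2.const_mul _
  have hC : IntegrableOn
      (fun s => (ε * δ / (2 * (1 + ε))) * ((∫ r in Ioi s, K r) * ‖η s‖^2)) (Ici 0) :=
    h3.const_mul _
  have hAB : IntegrableOn
      (fun s => ((1 + ε) / 2 * ‖u‖^2) * K s + (1/2) * (K s * ‖η s‖^2)) (Ici 0) := hA.add hB
  have hmono := setIntegral_mono_on h1 (hAB.sub hC) measurableSet_Ici hpt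
  simp only [Pi.sub_apply] at hmono
  rw [integral_sub hAB hC, integral_add hA hB, integral_const_mul, integral_const_mul,
    integral_const_mul, integral_Ici_eq_integral_Ioi (f := K), ← hk] at hmono
  linarith
end

section
/- Let (X, 𝒳) be a measurable space and, for each t > 0, let P_t be a Markov (probability) kernel on X. Let μ be a probability measure on X invariant for every P_t, i.e., ∫_X P_t(x, A) μ(dx) = μ(A) for every A ∈ 𝒳 and t > 0. Suppose V : X → [0,∞) is measurable and there exist constants c > 0 and C > 0 such that ∫_X V(y) P_t(x, dy) ≤ e^{−c·t}·V(x) + C for all x ∈ X and t > 0. Then ∫_X V dμ ≤ C; in particular V is μ-integrable. -/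
/-!
`V` is not known to be `μ`-integrable, so the Lyapunov bound cannot be integrated directly.
Truncate instead: for every constant `M < ∞`, invariance gives
`∫ V ∧ M dμ = ∫ P_t (V ∧ M) dμ ≤ ∫ (e^{-ct} V + C) ∧ M dμ`.
The right-hand side is dominated by `M`, so as `t → ∞` it tends to `C ∧ M ≤ C`.
Monotone convergence as `M → ∞` concludes.
-/

open MeasureTheory ProbabilityTheory
open Filter Topology

/-- If `μ` is invariant for each Markov kernel `P_t` (`t > 0`) and
`V ≥ 0` is measurable with `∫ V(y) P_t(x,dy) ≤ e^{-ct} V(x) + C` for all `x` and `t > 0`,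
then `∫ V dμ ≤ C`; in particular `V` is `μ`-integrable. -/
theorem stmt8 {X : Type*} [MeasurableSpace X]
    (P : ℝ → Kernel X X) (hP : ∀ t > (0:ℝ), IsMarkovKernel (P t))
    (μ : Measure X) [IsProbabilityMeasure μ]
    (hinv : ∀ t > (0:ℝ), ∀ A : Set X, MeasurableSet A → ∫⁻ x, P t x A ∂μ = μ A)
    (V : X → ℝ) (hV : Measurable V) (hV0 : ∀ x, 0 ≤ V x)
    (c C : ℝ) (hc : 0 < c) (hC : 0 < C)
    (hLyap : ∀ t > (0:ℝ), ∀ x, ∫⁻ y, ENNReal.ofReal (V y) ∂(P t x) ≤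
      ENNReal.ofReal (Real.exp (-c * t) * V x + C)) :
    (∫⁻ x, ENNReal.ofReal (V x) ∂μ ≤ ENNReal.ofReal C) ∧ Integrable V μ := by
  -- Invariance, extended from sets to nonnegative measurable functions.
  have hbind : ∀ t > (0:ℝ), ∀ f : X → ENNReal, Measurable f →
      ∫⁻ x, f x ∂μ = ∫⁻ x, ∫⁻ y, f y ∂(P t x) ∂μ := by
    intro t ht f hf
    have hμ : μ.bind (P t) = μ := by
      ext A hA
      rw [Measure.bind_apply hA (P t).aemeasurable, hinv t ht A hA]
    rw [← Measure.lintegral_bind (P t).aemeasurable hf.aemeasurable, hμ]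
  have hVm : Measurable fun x => ENNReal.ofReal (V x) := hV.ennreal_ofReal
  have htrunc : ∀ N : ℕ, ∫⁻ x, min (ENNReal.ofReal (V x)) N ∂μ ≤ ENNReal.ofReal C := by
    intro N
    have hstep : ∀ n : ℕ, ∫⁻ x, min (ENNReal.ofReal (V x)) N ∂μ ≤
        ∫⁻ x, min (ENNReal.ofReal (Real.exp (-c * ((n : ℝ) + 1)) * V x + C)) N ∂μ := by
      intro n
      have ht : (0:ℝ) < (n : ℝ) + 1 := by positivity
      have := hP _ ht
      rw [hbind _ ht _ (hVm.min measurable_const)]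
      refine lintegral_mono fun x => le_min ?_ ?_
      · exact (lintegral_mono fun y => min_le_left _ _).trans (hLyap _ ht x)
      · exact (lintegral_mono fun y => min_le_right _ _).trans (by simp)
    have hexp : Tendsto (fun n : ℕ => Real.exp (-c * ((n : ℝ) + 1))) atTop (𝓝 0) := by
      refine Real.tendsto_exp_atBot.comp (Tendsto.const_mul_atTop_of_neg (by linarith) ?_)
      exact tendsto_atTop_add_const_right _ _ tendsto_natCast_atTop_atTop
    have hlim : Tendsto (fun n : ℕ =>
        ∫⁻ x, min (ENNReal.ofReal (Real.exp (-c * ((n : ℝ) + 1)) * V x + C)) N ∂μ) atTop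
        (𝓝 (∫⁻ _, min (ENNReal.ofReal C) N ∂μ)) := by
      refine tendsto_lintegral_of_dominated_convergence (fun _ => (N : ENNReal)) ?_ ?_ ?_ ?_
      · intro n
        exact ((hV.const_mul _).add_const _).ennreal_ofReal.min measurable_const
      · exact fun n => ae_of_all _ fun x => min_le_right _ _
      · simp
      · refine ae_of_all _ fun x => Tendsto.min (ENNReal.tendsto_ofReal ?_) tendsto_const_nhds
        simpa using (hexp.mul_const (V x)).add_const C
    refine (ge_of_tendsto' hlim hstep).trans ?_
    simp
  have hbound : ∫⁻ x, ENNReal.ofReal (V x) ∂μ ≤ ENNReal.ofReal C := by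
    refine le_of_tendsto' (lintegral_tendsto_of_tendsto_of_monotone
      (f := fun (N : ℕ) x => min (ENNReal.ofReal (V x)) N)
      (fun N => (hVm.min measurable_const).aemeasurable) ?_ ?_) htrunc
    · refine ae_of_all _ fun x m n hmn => ?_
      exact min_le_min_left _ (by exact_mod_cast hmn)
    · refine ae_of_all _ fun x => ?_
      simpa using (tendsto_const_nhds (x := ENNReal.ofReal (V x))).min
        ENNReal.tendsto_nat_nhds_top
  refine ⟨hbound, hV.aestronglyMeasurable, ?_⟩
  rw [hasFiniteIntegral_iff_ofReal (ae_of_all _ hV0)]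
  exact hbound.trans_lt ENNReal.ofReal_lt_top
end

section
/- Let (X, 𝒳) be a measurable space and, for each r > 0, let P_r be a Markov (probability) kernel on X such that (r,x) ↦ ∫_X g(y) P_r(x,dy) is jointly measurable for every bounded measurable g ≥ 0. Let μ be a probability measure on X invariant for every P_r. Suppose V, G : X → [0,∞) are measurable, ∫_X V dμ < ∞, and there exists C > 0 such that ∫_0^t (∫_X G(y) P_r(x, dy)) dr ≤ C·(V(x) + t) for all x ∈ X and t > 0. Then ∫_X G dμ ≤ C. -/
/-!
Integrating the bound `∫_0^t P_r G dr ≤ C (V + t)` against `μ` and exchanging the integrals gives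
`t ∫ G dμ ≤ C (∫ V dμ + t)`, because `∫ P_r G dμ = ∫ G dμ` for every `r > 0` by invariance.
With `t = 1` this shows that `∫ G dμ` is finite, and dividing by `t → ∞` shows that it is at most
`C`. All integrals are of nonnegative functions, so Tonelli's theorem needs only the joint
measurability of `(r, x) ↦ P_r G(x)`, which follows from the bounded case by writing `G` as the
supremum of the truncations `min G n`.
-/

open MeasureTheory ProbabilityTheory Set

/-- Joint measurability passes from bounded to unbounded integrands by monotone convergence. -/
lemma measurable_lintegral_of_bounded {X : Type*} [MeasurableSpace X] (P : ℝ → Kernel X X)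
    (hjm : ∀ g : X → ℝ, Measurable g → (∀ x, 0 ≤ g x) → (∃ M, ∀ x, g x ≤ M) →
      Measurable (fun p : ℝ × X => ∫⁻ y, ENNReal.ofReal (g y) ∂(P p.1 p.2)))
    (G : X → ℝ) (hG : Measurable G) (hG0 : ∀ x, 0 ≤ G x) :
    Measurable (fun p : ℝ × X => ∫⁻ y, ENNReal.ofReal (G y) ∂(P p.1 p.2)) := by
  have hsup : ∀ y, ENNReal.ofReal (G y) = ⨆ n : ℕ, ENNReal.ofReal (min (G y) n) := by
    intro y
    apply le_antisymm
    · obtain ⟨n, hn⟩ := exists_nat_ge (G y)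
      exact le_iSup_of_le n (by rw [min_eq_left hn])
    · exact iSup_le fun n => ENNReal.ofReal_le_ofReal (min_le_left _ _)
  have heq : (fun p : ℝ × X => ∫⁻ y, ENNReal.ofReal (G y) ∂(P p.1 p.2)) =
      fun p => ⨆ n : ℕ, ∫⁻ y, ENNReal.ofReal (min (G y) n) ∂(P p.1 p.2) := by
    funext p
    simp_rw [hsup]
    refine lintegral_iSup (fun n => (hG.min measurable_const).ennreal_ofReal) ?_
    intro m n hmn y
    exact ENNReal.ofReal_le_ofReal (min_le_min_left _ (by exact_mod_cast hmn))
  rw [heq]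
  exact Measurable.iSup fun n => hjm _ (hG.min measurable_const)
    (fun x => le_min (hG0 x) n.cast_nonneg) ⟨n, fun x => min_le_right _ _⟩

/-- Invariance on sets extends to nonnegative measurable functions, since it says `μ.bind κ = μ`. -/
lemma lintegral_lintegral_of_invariant {X : Type*} [MeasurableSpace X] (κ : Kernel X X)
    (μ : Measure X) (hinv : ∀ A : Set X, MeasurableSet A → ∫⁻ x, κ x A ∂μ = μ A)
    (f : X → ENNReal) (hf : Measurable f) :
    ∫⁻ x, ∫⁻ y, f y ∂(κ x) ∂μ = ∫⁻ x, f x ∂μ := by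
  have hb : μ.bind κ = μ := by
    ext A hA
    rw [Measure.bind_apply hA κ.measurable.aemeasurable, hinv A hA]
  rw [← Measure.lintegral_bind κ.measurable.aemeasurable hf.aemeasurable, hb]

/-- If `μ` is invariant for each Markov kernel `P_r` (`r > 0`),
`(r,x) ↦ ∫ g dP_r(x,·)` is jointly measurable for bounded measurable `g ≥ 0`,
`V, G ≥ 0` are measurable, `V` is `μ`-integrable, and
`∫_0^t ∫ G(y) P_r(x,dy) dr ≤ C (V(x) + t)` for all `x` and `t > 0`, then `∫ G dμ ≤ C`. -/
theorem stmt9 {X : Type*} [MeasurableSpace X]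
    (P : ℝ → Kernel X X) (hP : ∀ r > (0:ℝ), IsMarkovKernel (P r))
    (hjm : ∀ g : X → ℝ, Measurable g → (∀ x, 0 ≤ g x) → (∃ M, ∀ x, g x ≤ M) →
      Measurable (fun p : ℝ × X => ∫⁻ y, ENNReal.ofReal (g y) ∂(P p.1 p.2)))
    (μ : Measure X) [IsProbabilityMeasure μ]
    (hinv : ∀ r > (0:ℝ), ∀ A : Set X, MeasurableSet A → ∫⁻ x, P r x A ∂μ = μ A)
    (V G : X → ℝ) (hV : Measurable V) (hG : Measurable G)
    (hV0 : ∀ x, 0 ≤ V x) (hG0 : ∀ x, 0 ≤ G x)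
    (hVint : Integrable V μ)
    (C : ℝ) (hC : 0 < C)
    (hbound : ∀ x, ∀ t > (0:ℝ),
      ∫⁻ r in Ioc (0:ℝ) t, (∫⁻ y, ENNReal.ofReal (G y) ∂(P r x)) ≤
        ENNReal.ofReal (C * (V x + t))) :
    ∫⁻ x, ENNReal.ofReal (G x) ∂μ ≤ ENNReal.ofReal C := by
  set I := ∫⁻ x, ENNReal.ofReal (G x) ∂μ
  have hmeas := measurable_lintegral_of_bounded P hjm G hG hG0
  have hv : 0 ≤ ∫ x, V x ∂μ := integral_nonneg hV0
  have key : ∀ t > (0:ℝ), I * ENNReal.ofReal t ≤ ENNReal.ofReal (C * ((∫ x, V x ∂μ) + t)) := by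
    intro t ht
    calc I * ENNReal.ofReal t
        = ∫⁻ _r in Ioc (0:ℝ) t, I := by simp
      _ = ∫⁻ r in Ioc (0:ℝ) t, ∫⁻ x, ∫⁻ y, ENNReal.ofReal (G y) ∂(P r x) ∂μ := by
          refine setLIntegral_congr_fun measurableSet_Ioc fun r hr => ?_
          exact (lintegral_lintegral_of_invariant (P r) μ (hinv r hr.1) _
            hG.ennreal_ofReal).symm
      _ = ∫⁻ x, (∫⁻ r in Ioc (0:ℝ) t, ∫⁻ y, ENNReal.ofReal (G y) ∂(P r x)) ∂μ :=
          lintegral_lintegral_swap hmeas.aemeasurable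
      _ ≤ ∫⁻ x, ENNReal.ofReal (C * (V x + t)) ∂μ := lintegral_mono fun x => hbound x t ht
      _ = ENNReal.ofReal (∫ x, C * (V x + t) ∂μ) :=
          (ofReal_integral_eq_lintegral_ofReal
            ((hVint.add (integrable_const t)).const_mul C)
            (Filter.Eventually.of_forall fun x =>
              mul_nonneg hC.le (add_nonneg (hV0 x) ht.le))).symm
      _ = ENNReal.ofReal (C * ((∫ x, V x ∂μ) + t)) := by
          rw [integral_const_mul, integral_add hVint (integrable_const t)]
          simp
  have hfin : I ≠ ⊤ := by
    have h1 := key 1 one_pos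
    rw [ENNReal.ofReal_one, mul_one] at h1
    exact ne_top_of_le_ne_top ENNReal.ofReal_ne_top h1
  rw [← ENNReal.ofReal_toReal hfin]
  apply ENNReal.ofReal_le_ofReal
  by_contra! hlt
  have hd : 0 < I.toReal - C := sub_pos.mpr hlt
  -- The bound reads `t * (I - C) ≤ C * ∫ V dμ`; this `t` makes the left side exceed
  -- the right side by one.
  obtain ⟨t, ht0, hte⟩ : ∃ t > (0:ℝ), t * (I.toReal - C) = C * (∫ x, V x ∂μ) + 1 :=
    ⟨_, div_pos (by positivity) hd, div_mul_cancel₀ _ hd.ne'⟩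
  have hk := key t ht0
  rw [← ENNReal.ofReal_toReal hfin, ← ENNReal.ofReal_mul ENNReal.toReal_nonneg,
    ENNReal.ofReal_le_ofReal_iff (by positivity)] at hk
  linarith
end

section
/- Let ρ : [0,∞) → ℝ be continuously differentiable, let η̃ : [0,∞) → ℝ be continuously differentiable with compact support, and let u : [0,∞) → ℝ and η₀ : [0,∞) → ℝ be continuous. Define η(t;s) := u(t−s) for 0 ≤ s ≤ t and η(t;s) := η₀(s−t) for s > t. Then for every t ≥ 0, ∫_0^∞ ρ(s)·η(t;s)·η̃(s) ds = ∫_0^∞ ρ(s)·η₀(s)·η̃(s) ds + ∫_0^t ρ(0)·u(r)·η̃(0) dr + ∫_0^t (∫_0^∞ η(r;s)·(ρ'(s)·η̃(s) + ρ(s)·η̃'(s)) ds) dr. -/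
open MeasureTheory Set intervalIntegral

/-! Put `g x = u (-x)` for `x ≤ 0` and `g x = η₀ x` for `x > 0`, so that `η t s = g (s - t)`,
and put `φ = ρ * ηt`, a compactly supported `C¹` function. After the translation `x = s - t`,
`∫_{s ≥ 0} η t s * φ s = ∫_ℝ g x * Φ (x + t)` with `Φ = 1_{[0,∞)} φ`. The distributional derivative
of `Φ` is `φ(0) δ₀ + 1_{[0,∞)} φ'`, which in integrated form (`indicator_shift_eq`) reads
`Φ (x + t) = Φ x + φ(0) 1_{[-t,0)}(x) + ∫_0^t (1_{[0,∞)} φ') (x + r) dr`.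
Multiplying by `g`, integrating over `ℝ` and exchanging the two integrals by Fubini
(`integrable_shift_prod`) gives the identity. -/

/-- Integrated form of `Φ' = φ(0) δ₀ + 1_{[0,∞)} φ'` for `Φ = 1_{[0,∞)} φ`. -/
lemma indicator_shift_eq {φ : ℝ → ℝ} (hφ : ContDiff ℝ 1 φ) {t : ℝ} (ht : 0 ≤ t) (x : ℝ) :
    (Ici (0:ℝ)).indicator φ (x + t) = (Ici (0:ℝ)).indicator φ x
      + (Ico (-t) 0).indicator (fun _ => φ 0) x
      + ∫ r in (0:ℝ)..t, (Ici (0:ℝ)).indicator (deriv φ) (x + r) := by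
  have hc : Continuous (deriv φ) := hφ.continuous_deriv le_rfl
  have hftc : ∀ a b : ℝ, ∫ y in a..b, deriv φ y = φ b - φ a := fun a b =>
    integral_deriv_eq_sub (fun y _ => (hφ.differentiable one_ne_zero).differentiableAt)
      (hc.intervalIntegrable _ _)
  have hpos : ∀ a b : ℝ, 0 ≤ a → a ≤ b →
      ∫ y in a..b, (Ici (0:ℝ)).indicator (deriv φ) y = φ b - φ a := by
    intro a b ha hab
    rw [← hftc]
    refine integral_congr fun y hy => ?_
    rw [uIcc_of_le hab] at hy
    exact indicator_of_mem (s := Ici (0:ℝ)) (ha.trans hy.1) _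
  have hneg : ∀ a b : ℝ, a ≤ b → b ≤ 0 →
      ∫ y in a..b, (Ici (0:ℝ)).indicator (deriv φ) y = 0 := by
    intro a b hab hb
    rw [integral_of_le hab, integral_Ioc_eq_integral_Ioo]
    refine setIntegral_eq_zero_of_forall_eq_zero fun y hy => ?_
    exact indicator_of_notMem (fun h : 0 ≤ y => by linarith [hy.2]) _
  have hint : ∀ a b : ℝ, IntervalIntegrable ((Ici (0:ℝ)).indicator (deriv φ)) volume a b := by
    intro a b
    have := hc.intervalIntegrable (μ := volume) a b
    exact ⟨this.1.indicator measurableSet_Ici, this.2.indicator measurableSet_Ici⟩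
  rw [integral_comp_add_left (fun y => (Ici (0:ℝ)).indicator (deriv φ) y) x, add_zero]
  rcases le_or_gt 0 x with hx | hx
  · rw [hpos _ _ hx (by linarith), indicator_of_mem (s := Ici (0:ℝ)) (show 0 ≤ x + t by linarith),
      indicator_of_mem (s := Ici (0:ℝ)) hx, indicator_of_notMem (fun h => by linarith [h.2])]
    ring
  · rw [indicator_of_notMem (s := Ici (0:ℝ)) (a := x) (fun h : 0 ≤ x => by linarith)]
    rcases le_or_gt (-t) x with hxt | hxt
    · rw [← integral_add_adjacent_intervals (hint x 0) (hint 0 (x + t)), hneg _ _ hx.le le_rfl,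
        hpos _ _ le_rfl (by linarith), indicator_of_mem (s := Ici (0:ℝ)) (show 0 ≤ x + t by linarith),
        indicator_of_mem (s := Ico (-t) 0) ⟨hxt, hx⟩]
      ring
    · rw [hneg _ _ (by linarith) (by linarith),
        indicator_of_notMem (s := Ici (0:ℝ)) (fun h : 0 ≤ x + t => by linarith),
        indicator_of_notMem (s := Ico (-t) 0) (fun h => by linarith [h.1])]
      ring

lemma integrable_mul_of_bdd_of_compact {g k : ℝ → ℝ} (hg : LocallyIntegrable g)
    (hk : Measurable k) {C : ℝ} (hC : ∀ x, ‖k x‖ ≤ C) {a b : ℝ}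
    (hsupp : ∀ x, x ∉ Icc a b → k x = 0) : Integrable fun x => g x * k x := by
  have h1 : Integrable ((Icc a b).indicator g) :=
    (hg.integrableOn_isCompact isCompact_Icc).integrable_indicator measurableSet_Icc
  refine (h1.mul_bdd hk.aestronglyMeasurable (Filter.Eventually.of_forall hC)).congr
    (Filter.Eventually.of_forall fun x => ?_)
  by_cases hx : x ∈ Icc a b
  · simp [indicator_of_mem hx]
  · simp [hsupp x hx]

/-- For `r ∈ (0, t]` the function `x ↦ k (x + r)` lives on the fixed interval `[a - t, b]`, on
which `g` is integrable. -/
lemma integrable_shift_prod {g k : ℝ → ℝ} (hg : LocallyIntegrable g)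
    (hk : Measurable k) {C : ℝ} (hC : ∀ x, ‖k x‖ ≤ C) {a b : ℝ}
    (hsupp : ∀ x, x ∉ Icc a b → k x = 0) (t : ℝ) :
    Integrable (fun p : ℝ × ℝ => g p.2 * k (p.2 + p.1))
      ((volume.restrict (Ioc 0 t)).prod volume) := by
  have h1 : Integrable ((Icc (a - t) b).indicator g) :=
    (hg.integrableOn_isCompact isCompact_Icc).integrable_indicator measurableSet_Icc
  have h2 : Integrable (fun p : ℝ × ℝ => (Icc (a - t) b).indicator g p.2)
      ((volume.restrict (Ioc 0 t)).prod volume) := h1.comp_snd _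
  have hkm : Measurable fun p : ℝ × ℝ => k (p.2 + p.1) :=
    hk.comp (measurable_snd.add measurable_fst)
  refine (h2.mul_bdd hkm.aestronglyMeasurable
    (Filter.Eventually.of_forall fun p => hC _)).congr ?_
  have hae : ∀ᵐ p ∂((volume.restrict (Ioc 0 t)).prod (volume : Measure ℝ)),
      p.1 ∈ Ioc 0 t :=
    Measure.quasiMeasurePreserving_fst.ae (ae_restrict_mem measurableSet_Ioc)
  filter_upwards [hae] with p hp
  by_cases hx : p.2 ∈ Icc (a - t) b
  · simp [indicator_of_mem hx]
  · rw [hsupp (p.2 + p.1)]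
    · simp
    · exact fun h => hx ⟨by linarith [h.1, hp.2], by linarith [h.2, hp.1]⟩

/-- The transport identity, with the solution written as `g (s - t)`. -/
lemma transport_weak {g φ : ℝ → ℝ} (hg : LocallyIntegrable g) (hφ : ContDiff ℝ 1 φ)
    (hφs : HasCompactSupport φ) {t : ℝ} (ht : 0 ≤ t) :
    ∫ s in Ici (0:ℝ), g (s - t) * φ s =
      (∫ s in Ici (0:ℝ), g s * φ s) + (∫ r in (0:ℝ)..t, g (-r) * φ 0)
        + ∫ r in (0:ℝ)..t, ∫ s in Ici (0:ℝ), g (s - r) * deriv φ s := by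
  have hc : Continuous (deriv φ) := hφ.continuous_deriv le_rfl
  have hshift : ∀ (r : ℝ) (f : ℝ → ℝ), ∫ s in Ici (0:ℝ), g (s - r) * f s
      = ∫ x, g x * (Ici (0:ℝ)).indicator f (x + r) := by
    intro r f
    rw [← MeasureTheory.integral_indicator measurableSet_Ici,
      ← integral_add_right_eq_self (μ := volume) _ r]
    congr 1 with x
    by_cases hx : x + r ∈ Ici (0:ℝ)
    · simp only [indicator_of_mem hx, add_sub_cancel_right]
    · simp only [indicator_of_notMem hx, mul_zero]
  -- Bounds and bounded supports for the truncated functions.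
  have hbd : ∀ f : ℝ → ℝ, Continuous f → HasCompactSupport f → ∃ C a b : ℝ,
      (∀ x, ‖(Ici (0:ℝ)).indicator f x‖ ≤ C) ∧
      (∀ x, x ∉ Icc a b → (Ici (0:ℝ)).indicator f x = 0) ∧
      Measurable ((Ici (0:ℝ)).indicator f) := by
    intro f hf hfs
    obtain ⟨C, hC⟩ := hfs.exists_bound_of_continuous hf
    obtain ⟨R, hR⟩ := hfs.isCompact.isBounded.subset_closedBall 0
    rw [Real.closedBall_eq_Icc] at hR
    refine ⟨C, 0 - R, 0 + R, fun x => (norm_indicator_le_norm_self f x).trans (hC x),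
      fun x hx => ?_, hf.measurable.indicator measurableSet_Ici⟩
    have : f x = 0 := image_eq_zero_of_notMem_tsupport fun h => hx (hR h)
    simp [indicator_apply, this]
  obtain ⟨C, a, b, hC, hs, hm⟩ := hbd φ hφ.continuous hφs
  obtain ⟨C', a', b', hC', hs', hm'⟩ := hbd (deriv φ) hc hφs.deriv
  have hI1 := integrable_mul_of_bdd_of_compact hg hm hC hs
  have hI2 : Integrable fun x => g x * (Ico (-t) 0).indicator (fun _ => φ 0) x := by
    refine integrable_mul_of_bdd_of_compact hg (measurable_const.indicator measurableSet_Ico)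
      (C := ‖φ 0‖) (fun x => norm_indicator_le_norm_self (fun _ => φ 0) x) (a := -t) (b := 0)
      fun x hx => indicator_of_notMem (fun h => hx (Ico_subset_Icc_self h)) _
  have hI12 : Integrable fun x => g x * (Ici (0:ℝ)).indicator φ x
      + g x * (Ico (-t) 0).indicator (fun _ => φ 0) x := hI1.add hI2
  have hI3 := integrable_shift_prod hg hm' hC' hs' t
  have hI4 : Integrable fun x =>
      g x * ∫ r in (0:ℝ)..t, (Ici (0:ℝ)).indicator (deriv φ) (x + r) := by
    refine hI3.integral_prod_right.congr (Filter.Eventually.of_forall fun x => ?_)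
    simp only [integral_of_le ht, MeasureTheory.integral_const_mul]
  have e1 : ∫ s in Ici (0:ℝ), g s * φ s = ∫ x, g x * (Ici (0:ℝ)).indicator φ x := by
    simpa using hshift 0 φ
  have e2 : ∫ r in (0:ℝ)..t, g (-r) * φ 0
      = ∫ x, g x * (Ico (-t) 0).indicator (fun _ => φ 0) x := by
    rw [integral_comp_neg (fun x => g x * φ 0), neg_zero, integral_of_le (by linarith),
      ← integral_Ico_eq_integral_Ioc, ← MeasureTheory.integral_indicator measurableSet_Ico]
    congr 1 with x
    by_cases hx : x ∈ Ico (-t) 0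
    · simp only [indicator_of_mem hx]
    · simp only [indicator_of_notMem hx, mul_zero]
  have e3 : ∫ r in (0:ℝ)..t, ∫ s in Ici (0:ℝ), g (s - r) * deriv φ s
      = ∫ x, g x * ∫ r in (0:ℝ)..t, (Ici (0:ℝ)).indicator (deriv φ) (x + r) := by
    simp only [hshift, integral_of_le ht]
    rw [integral_integral_swap hI3]
    simp only [MeasureTheory.integral_const_mul]
  rw [e1, e2, e3, hshift, ← integral_add hI1 hI2, ← integral_add hI12 hI4]
  congr 1 with x
  rw [indicator_shift_eq hφ ht x, mul_add, mul_add]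

/-- Weak formulation of the transport equation for the memory variable
(scalar form): with `η(t;s) = u(t-s)` for `0 ≤ s ≤ t` and `η(t;s) = η₀(s-t)` for `s > t`,
`ρ` and `η̃` continuously differentiable (`η̃` compactly supported), `u, η₀` continuous,
for every `t ≥ 0`:
`∫_0^∞ ρ(s) η(t;s) η̃(s) ds = ∫_0^∞ ρ(s) η₀(s) η̃(s) ds + ∫_0^t ρ(0) u(r) η̃(0) dr
  + ∫_0^t ∫_0^∞ η(r;s)(ρ'(s) η̃(s) + ρ(s) η̃'(s)) ds dr`. -/
theorem stmt11 (ρ : ℝ → ℝ) (hρ : ContDiff ℝ 1 ρ)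
    (ηt : ℝ → ℝ) (hηt : ContDiff ℝ 1 ηt) (hηtsupp : HasCompactSupport ηt)
    (u η₀ : ℝ → ℝ) (hu : Continuous u) (hη₀ : Continuous η₀)
    (η : ℝ → ℝ → ℝ)
    (hη : ∀ t s : ℝ, η t s = if s ≤ t then u (t - s) else η₀ (s - t)) :
    ∀ t ≥ (0:ℝ),
      ∫ s in Ici (0:ℝ), ρ s * η t s * ηt s =
        (∫ s in Ici (0:ℝ), ρ s * η₀ s * ηt s)
        + (∫ r in (0:ℝ)..t, ρ 0 * u r * ηt 0)
        + ∫ r in (0:ℝ)..t, ∫ s in Ici (0:ℝ),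
            η r s * (deriv ρ s * ηt s + ρ s * deriv ηt s) := by
  intro t ht
  set g : ℝ → ℝ := fun x => if x ≤ 0 then u (-x) else η₀ x with hgdef
  have hg : LocallyIntegrable g := by
    have h1 := ((hu.comp continuous_neg).locallyIntegrable (μ := volume)).indicator
      (measurableSet_Iic (a := (0:ℝ)))
    have h2 := (hη₀.locallyIntegrable (μ := volume)).indicator (measurableSet_Ioi (a := (0:ℝ)))
    have h : g = (Iic (0:ℝ)).indicator (u ∘ fun a => -a) + (Ioi (0:ℝ)).indicator η₀ := by
      ext x
      by_cases hx : x ≤ 0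
      · simp [hgdef, hx]
      · simp [hgdef, hx, not_le.mp hx]
    rw [h]
    intro x
    obtain ⟨s, hs, hs'⟩ := h1 x
    obtain ⟨s₂, hs₂, hs₂'⟩ := h2 x
    exact ⟨s ∩ s₂, Filter.inter_mem hs hs₂, (hs'.mono_set inter_subset_left).add
      (hs₂'.mono_set inter_subset_right)⟩
  have hηg : ∀ r s, η r s = g (s - r) := by
    intro r s
    simp [hη, hgdef]
  have hφ : ContDiff ℝ 1 (fun s => ρ s * ηt s) := hρ.mul hηt
  have hd : ∀ s, deriv ρ s * ηt s + ρ s * deriv ηt s = deriv (fun s => ρ s * ηt s) s := by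
    intro s
    exact (deriv_fun_mul (hρ.differentiable one_ne_zero).differentiableAt
      (hηt.differentiable one_ne_zero).differentiableAt).symm
  have key := transport_weak hg hφ (hηtsupp.mul_left (f := ρ)) ht
  have e0 : ∫ s in Ici (0:ℝ), ρ s * η t s * ηt s
      = ∫ s in Ici (0:ℝ), g (s - t) * (ρ s * ηt s) := by
    congr 1 with s
    rw [hηg]; ring
  -- `g` and `η₀` may differ at the endpoint `0`, a null set.
  have e1 : ∫ s in Ici (0:ℝ), ρ s * η₀ s * ηt s
      = ∫ s in Ici (0:ℝ), g s * (ρ s * ηt s) := by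
    rw [integral_Ici_eq_integral_Ioi, integral_Ici_eq_integral_Ioi]
    refine setIntegral_congr_fun measurableSet_Ioi fun s hs => ?_
    simp only [hgdef, if_neg (not_le.mpr (mem_Ioi.mp hs))]
    ring
  have e2 : ∫ r in (0:ℝ)..t, ρ 0 * u r * ηt 0
      = ∫ r in (0:ℝ)..t, g (-r) * (ρ 0 * ηt 0) := by
    refine integral_congr fun r hr => ?_
    rw [uIcc_of_le ht] at hr
    simp only [hgdef, if_pos (neg_nonpos.mpr hr.1), neg_neg]
    ring
  rw [e0, e1, e2, key]
  simp only [hηg, hd]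
end

section
/- Let α : ℕ → ℝ be positive and nondecreasing and let n̄ ∈ ℕ. For u : ℕ → ℝ write ‖u‖² := Σ_k u_k², ‖u‖₁² := Σ_k α_k·u_k², ⟨u,v⟩₁ := Σ_k α_k·u_k·v_k, and let P u be the truncation of u to indices k ≤ n̄ (i.e., (Pu)_k = u_k for k ≤ n̄ and (Pu)_k = 0 for k > n̄). Let K : [0,∞) → ℝ be positive and integrable with k_K := ∫_0^∞ K(s) ds, set ρ(t) := ∫_t^∞ K(s) ds, and assume K(s) ≥ δ·ρ(s) for all s ≥ 0 with δ > 0. Let ε > 0 satisfy K_ε := 1 − (1 + ε/2)·k_K ≥ 0. Let u satisfy ‖u‖₁ < ∞ and let η : [0,∞) → (ℕ → ℝ) be such that s ↦ K(s)·⟨η(s), u⟩₁, s ↦ K(s)·‖η(s)‖₁², and s ↦ ρ(s)·‖η(s)‖₁² are integrable on [0,∞). Then −‖u‖₁² + ∫_0^∞ K(s)·⟨η(s), u⟩₁ ds + (k_K/2)·‖u‖₁² − (1/2)·∫_0^∞ K(s)·‖η(s)‖₁² ds − K_ε·α_{n̄}·‖Pu‖² ≤ −K_ε·α_{n̄}·‖u‖²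 − (ε·δ/(2·(1+ε)))·∫_0^∞ ρ(s)·‖η(s)‖₁² ds. -/
open MeasureTheory Set

/-! Young's inequality with weight `1 + ε`, integrated against `K`, bounds the memory coupling by
`(1 + ε) k_K / 2 * ‖u‖₁² + 1 / (2 (1 + ε)) * ∫ K ‖η‖₁²` (`young_weighted`). The coefficients of
`‖u‖₁²` then add up to `-K_ε`, and those of `∫ K ‖η‖₁²` to `-ε / (2 (1 + ε))`, where `K ≥ δ ρ`
applies. The remaining term `-K_ε (‖u‖₁² + α_{n̄} ‖P u‖²)` is at most `-K_ε α_{n̄} ‖u‖²` by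
comparing the series term by term (`spectral_gap`). -/

theorem young_weighted (α u v : ℕ → ℝ) (hα : ∀ k, 0 < α k) {c : ℝ} (hc : 0 < c)
    (hu : Summable (fun k => α k * (u k) ^ 2)) (hv : Summable (fun k => α k * (v k) ^ 2)) :
    ∑' k, α k * v k * u k
      ≤ c / 2 * (∑' k, α k * (u k) ^ 2) + 1 / (2 * c) * ∑' k, α k * (v k) ^ 2 := by
  have hs : Summable (fun k => α k * v k * u k) := by
    refine Summable.of_norm_bounded (hu.add hv) fun k => ?_
    rw [Real.norm_eq_abs, abs_le]
    constructor
    · nlinarith [mul_nonneg (hα k).le (sq_nonneg (u k + v k)),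
        mul_nonneg (hα k).le (sq_nonneg (u k)), mul_nonneg (hα k).le (sq_nonneg (v k))]
    · nlinarith [mul_nonneg (hα k).le (sq_nonneg (u k - v k)),
        mul_nonneg (hα k).le (sq_nonneg (u k)), mul_nonneg (hα k).le (sq_nonneg (v k))]
  rw [← tsum_mul_left, ← tsum_mul_left, ← (hu.mul_left _).tsum_add (hv.mul_left _)]
  refine hs.tsum_le_tsum (fun k => ?_) ((hu.mul_left _).add (hv.mul_left _))
  have h : c / 2 * (α k * u k ^ 2) + 1 / (2 * c) * (α k * v k ^ 2) - α k * v k * u k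
      = α k * (c * u k - v k) ^ 2 / (2 * c) := by
    field_simp
    ring
  have h0 : 0 ≤ α k * (c * u k - v k) ^ 2 / (2 * c) :=
    div_nonneg (mul_nonneg (hα k).le (sq_nonneg _)) (by positivity)
  linarith

theorem spectral_gap (α u : ℕ → ℝ) (hα : ∀ k, 0 < α k) (hmono : Monotone α) (n : ℕ)
    (hu : Summable (fun k => α k * (u k) ^ 2)) :
    α n * (∑' k, (u k) ^ 2)
      ≤ (∑' k, α k * (u k) ^ 2) + α n * ∑' k, (if k ≤ n then u k else 0) ^ 2 := by
  have hsu : Summable (fun k => (u k) ^ 2) := by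
    refine Summable.of_nonneg_of_le (fun k => sq_nonneg _) (fun k => ?_) (hu.mul_left (α 0)⁻¹)
    rw [le_inv_mul_iff₀ (hα 0)]
    exact mul_le_mul_of_nonneg_right (hmono (Nat.zero_le k)) (sq_nonneg _)
  have hsP : Summable (fun k => (if k ≤ n then u k else 0) ^ 2) := by
    refine Summable.of_nonneg_of_le (fun k => sq_nonneg _) (fun k => ?_) hsu
    split_ifs
    · exact le_rfl
    · simpa using sq_nonneg (u k)
  rw [← tsum_mul_left, ← tsum_mul_left, ← hu.tsum_add (hsP.mul_left _)]
  refine (hsu.mul_left _).tsum_le_tsum (fun k => ?_) (hu.add (hsP.mul_left _))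
  split_ifs with h
  · linarith [mul_nonneg (hα k).le (sq_nonneg (u k))]
  · have := mul_le_mul_of_nonneg_right (hmono (not_le.mp h).le) (sq_nonneg (u k))
    simpa using this

/-- Complete deterministic energy estimate with spectral projection
(sequence-space form): with `α : ℕ → ℝ` positive nondecreasing, `‖u‖² = ∑ u_k²`,
`‖u‖₁² = ∑ α_k u_k²`, `⟨u,v⟩₁ = ∑ α_k u_k v_k`, `P` the truncation to indices `k ≤ n̄`,
`K` a positive integrable kernel with mass `k_K`, tail `ρ`, `K ≥ δρ`, `ε > 0` with
`K_ε := 1 - (1+ε/2) k_K ≥ 0`, one has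
`-‖u‖₁² + ∫_0^∞ K⟨η(s),u⟩₁ + (k_K/2)‖u‖₁² - (1/2)∫_0^∞ K‖η(s)‖₁² - K_ε α_{n̄} ‖Pu‖²
  ≤ -K_ε α_{n̄} ‖u‖² - (εδ/(2(1+ε))) ∫_0^∞ ρ‖η(s)‖₁²`. -/
theorem stmt13 (α : ℕ → ℝ) (hαpos : ∀ k, 0 < α k) (hαmono : Monotone α)
    (nb : ℕ)
    (K : ℝ → ℝ) (hKpos : ∀ s ∈ Ici (0:ℝ), 0 < K s)
    (hKint : IntegrableOn K (Ici 0))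
    (kK δ ε : ℝ) (hkK : kK = ∫ s in Ioi (0:ℝ), K s)
    (hδ : 0 < δ)
    (hKρ : ∀ s ∈ Ici (0:ℝ), δ * ∫ r in Ioi s, K r ≤ K s)
    (hε : 0 < ε) (hKε : 0 ≤ 1 - (1 + ε / 2) * kK)
    (u : ℕ → ℝ) (hu : Summable (fun k => α k * (u k) ^ 2))
    (η : ℝ → ℕ → ℝ)
    (hηsum : ∀ s ∈ Ici (0:ℝ), Summable (fun k => α k * (η s k) ^ 2))
    (h1 : IntegrableOn (fun s => K s * ∑' k, α k * η s k * u k) (Ici 0))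
    (h2 : IntegrableOn (fun s => K s * ∑' k, α k * (η s k) ^ 2) (Ici 0))
    (h3 : IntegrableOn
      (fun s => (∫ r in Ioi s, K r) * ∑' k, α k * (η s k) ^ 2) (Ici 0)) :
    -(∑' k, α k * (u k) ^ 2)
        + (∫ s in Ici (0:ℝ), K s * ∑' k, α k * η s k * u k)
        + (kK / 2) * (∑' k, α k * (u k) ^ 2)
        - (1 / 2) * (∫ s in Ici (0:ℝ), K s * ∑' k, α k * (η s k) ^ 2)
        - (1 - (1 + ε / 2) * kK) * α nb * (∑' k, (if k ≤ nb then u k else 0) ^ 2)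
      ≤ -(1 - (1 + ε / 2) * kK) * α nb * (∑' k, (u k) ^ 2)
        - (ε * δ / (2 * (1 + ε))) *
            ∫ s in Ici (0:ℝ), (∫ r in Ioi s, K r) * ∑' k, α k * (η s k) ^ 2 := by
  have hc : 0 < 1 + ε := by linarith
  have hcoupling : ∫ s in Ici (0:ℝ), K s * ∑' k, α k * η s k * u k
      ≤ (1 + ε) / 2 * (∑' k, α k * (u k) ^ 2) * kK
        + 1 / (2 * (1 + ε)) * ∫ s in Ici (0:ℝ), K s * ∑' k, α k * (η s k) ^ 2 := by
    rw [hkK, ← integral_Ici_eq_integral_Ioi, ← integral_const_mul, ← integral_const_mul,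
      ← integral_add (hKint.const_mul _) (h2.const_mul _)]
    refine setIntegral_mono_on h1 ((hKint.const_mul _).add (h2.const_mul _)) measurableSet_Ici
      fun s hs => ?_
    have := mul_le_mul_of_nonneg_left (young_weighted α u (η s) hαpos hc hu (hηsum s hs))
      (hKpos s hs).le
    linarith
  have hdecay : δ * ∫ s in Ici (0:ℝ), (∫ r in Ioi s, K r) * ∑' k, α k * (η s k) ^ 2
      ≤ ∫ s in Ici (0:ℝ), K s * ∑' k, α k * (η s k) ^ 2 := by
    rw [← integral_const_mul]
    refine setIntegral_mono_on (h3.const_mul _) h2 measurableSet_Ici fun s hs => ?_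
    have := mul_le_mul_of_nonneg_right (hKρ s hs)
      (show 0 ≤ ∑' k, α k * (η s k) ^ 2 from
        tsum_nonneg fun k => mul_nonneg (hαpos k).le (sq_nonneg (η s k)))
    linarith
  have hgap := mul_le_mul_of_nonneg_left (spectral_gap α u hαpos hαmono nb hu) hKε
  have hmem := mul_le_mul_of_nonneg_left hdecay
    (show 0 ≤ ε / (2 * (1 + ε)) by positivity)
  have e1 : 1 / (2 * (1 + ε)) = 1 / 2 - ε / (2 * (1 + ε)) := by
    field_simp
    ring
  have e2 : ε * δ / (2 * (1 + ε)) = ε / (2 * (1 + ε)) * δ := by ring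
  rw [e1] at hcoupling
  rw [e2]
  linarith
end
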